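/- Let I be a minimal ideal of a finite-dimensional Zinbiel superalgebra Z over a field. Then I·Z = Z·I = 0 and dim I = 1. -/

import Mathlib

open Module Submodule

/-- A Zinbiel superalgebra over a field `K`: a `K`-vector space `Z` with a bilinear
multiplication and a direct sum decomposition `Z = Z₀ ⊕ Z₁` such that
`Zᵢ·Zⱼ ⊆ Z_{i+j (mod 2)}` and, for all homogeneous `x, y, z`,
`(x·y)·z = x·(y·z + (−1)^{|y||z|} z·y)`. -/
structure ZinbielSuper (K : Type*) [Field K] (Z : Type*) [AddCommGroup Z] [Module K Z] where
  mul : Z →ₗ[K] Z →ₗ[K] Z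
  Z0 : Submodule K Z
  Z1 : Submodule K Z
  compl : IsCompl Z0 Z1
  mul00 : ∀ x ∈ Z0, ∀ y ∈ Z0, mul x y ∈ Z0
  mul01 : ∀ x ∈ Z0, ∀ y ∈ Z1, mul x y ∈ Z1
  mul10 : ∀ x ∈ Z1, ∀ y ∈ Z0, mul x y ∈ Z1
  mul11 : ∀ x ∈ Z1, ∀ y ∈ Z1, mul x y ∈ Z0
  zinb_even : ∀ x y z : Z, (x ∈ Z0 ∨ x ∈ Z1) → (y ∈ Z0 ∨ y ∈ Z1) → (z ∈ Z0 ∨ z ∈ Z1) →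
    (y ∈ Z0 ∨ z ∈ Z0) → mul (mul x y) z = mul x (mul y z + mul z y)
  zinb_odd : ∀ x y z : Z, (x ∈ Z0 ∨ x ∈ Z1) → y ∈ Z1 → z ∈ Z1 →
    mul (mul x y) z = mul x (mul y z - mul z y)

variable {K : Type*} [Field K] {Z : Type*} [AddCommGroup Z] [Module K Z]

/-- The linear span of all products `a·b` with `a ∈ A`, `b ∈ B`. -/
def mulSub (mul : Z →ₗ[K] Z →ₗ[K] Z) (A B : Submodule K Z) : Submodule K Z :=
  Submodule.span K {z : Z | ∃ a ∈ A, ∃ b ∈ B, mul a b = z}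

/-- `I` is a (two-sided) ideal of the Zinbiel superalgebra: `Z·I ⊆ I` and `I·Z ⊆ I`. -/
def IsIdeal (S : ZinbielSuper K Z) (I : Submodule K Z) : Prop :=
  ∀ x : Z, ∀ a ∈ I, S.mul x a ∈ I ∧ S.mul a x ∈ I

/-- `I` is a right ideal of the Zinbiel superalgebra: `I·Z ⊆ I`. -/
def IsRightIdeal (S : ZinbielSuper K Z) (I : Submodule K Z) : Prop :=
  ∀ a ∈ I, ∀ x : Z, S.mul a x ∈ I

/-- `I` is a minimal ideal: it is a nonzero ideal and the only ideals contained in it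
are `0` and itself. -/
def IsMinimalIdeal (S : ZinbielSuper K Z) (I : Submodule K Z) : Prop :=
  IsIdeal S I ∧ I ≠ ⊥ ∧ ∀ J : Submodule K Z, IsIdeal S J → J ≤ I → J = ⊥ ∨ J = I

/-- `I` is a minimal right ideal: it is a nonzero right ideal and the only right ideals
contained in it are `0` and itself. -/
def IsMinimalRightIdeal (S : ZinbielSuper K Z) (I : Submodule K Z) : Prop :=
  IsRightIdeal S I ∧ I ≠ ⊥ ∧ ∀ J : Submodule K Z, IsRightIdeal S J → J ≤ I → J = ⊥ ∨ J = I

/-!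
Right multiplications by homogeneous elements commute up to sign. Those by odd elements square to
`0`; if the one by an even element were not nilpotent, some polynomial in it would be a nonzero
idempotent `R_g`, which the Zinbiel identity rules out. Hence right multiplications span a
nilpotent space of operators, and `W ⊆ W·Z` forces `W = 0`; in particular `B·B ≠ B` for every
nonzero subalgebra `B`.

Induction along `B ⊋ B·B` then shows that `B·F = F` forces `F = 0`, because
`x(a(bf)) = (xa)(bf) ± x((ba)f)` expresses a long product of left multiplications by `B` through
left multiplications by `B·B`. So `Z` is nilpotent. For a minimal ideal `I`, the ideal
`Z·I + I·Z` is therefore not `I`, so it is `0`, and every line in `I` is an ideal.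
-/

section Nilpotent

open Polynomial in
theorem exists_pow_eq_pow_mul_mul_aeval {A : Type*} [Ring A] [Algebra K A] {a : A}
    (ha : IsAlgebraic K a) : ∃ (n : ℕ) (q : K[X]), a ^ n = a ^ n * (a * aeval a q) := by
  obtain ⟨p, hp0, hpa⟩ := ha
  obtain ⟨r, hpr, hr⟩ := exists_eq_pow_rootMultiplicity_mul_and_not_dvd p hp0 0
  set n := p.rootMultiplicity 0
  rw [C_0, sub_zero] at hpr hr
  have hr0 : r.coeff 0 ≠ 0 := mt X_dvd_iff.2 hr
  refine ⟨n, -C (r.coeff 0)⁻¹ * r.divX, ?_⟩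
  have hX : X ^ n = X ^ n * (X * (-C (r.coeff 0)⁻¹ * r.divX)) + C (r.coeff 0)⁻¹ * p := by
    have hC : C (r.coeff 0)⁻¹ * C (r.coeff 0) = 1 := by rw [← C_mul, inv_mul_cancel₀ hr0, C_1]
    linear_combination (-X ^ n) * hC + C (r.coeff 0)⁻¹ * X ^ n * X_mul_divX_add r
      - C (r.coeff 0)⁻¹ * hpr
  simpa only [map_add, map_mul, map_pow, aeval_X, hpa, mul_zero, add_zero]
    using congrArg (aeval a) hX

theorem mul_aeval_mem_of_mem {R A : Type*} [CommSemiring R] [Semiring A] [Algebra R A]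
    {B : NonUnitalSubalgebra R A} {a : A} (ha : a ∈ B) (q : Polynomial R) :
    a * Polynomial.aeval a q ∈ B := by
  induction q using Polynomial.induction_on with
  | C c =>
    rw [Polynomial.aeval_C, ← Algebra.commutes, ← Algebra.smul_def]
    exact SMulMemClass.smul_mem c ha
  | add p q hp hq => rw [map_add, mul_add]; exact add_mem hp hq
  | monomial n c h =>
    rw [pow_succ, ← mul_assoc, map_mul, Polynomial.aeval_X, ← mul_assoc]
    exact mul_mem h ha

theorem pow_succ_mem_of_mem {M σ : Type*} [Monoid M] [SetLike σ M] [MulMemClass σ M] {B : σ}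
    {b : M} (hb : b ∈ B) (n : ℕ) : b ^ (n + 1) ∈ B := by
  induction n with
  | zero => rwa [zero_add, pow_one]
  | succ n ih => rw [pow_succ]; exact mul_mem ih hb

theorem isNilpotent_of_forall_isIdempotentElem_eq_zero {A : Type*} [Ring A] [Algebra K A]
    {B : NonUnitalSubalgebra K A} {a : A} (ha : IsAlgebraic K a) (haB : a ∈ B)
    (hB : ∀ e ∈ B, IsIdempotentElem e → e = 0) : IsNilpotent a := by
  obtain ⟨n, q, hnq⟩ := exists_pow_eq_pow_mul_mul_aeval ha
  set c := Polynomial.aeval a q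
  have hcomm : Commute a c := by
    simpa using (Polynomial.commute_X q).map (Polynomial.aeval a)
  have habsorb : ∀ k, a ^ n * (a * c) ^ k = a ^ n := fun k => by
    induction k with
    | zero => rw [pow_zero, mul_one]
    | succ k ih => rw [pow_succ', ← mul_assoc, ← hnq, ih]
  have hidem : IsIdempotentElem ((a * c) ^ (n + 1)) := by
    have hfac : (a * c) ^ (n + 1) = c ^ (n + 1) * a * a ^ n := by
      rw [hcomm.mul_pow, mul_assoc, ← pow_succ', (hcomm.pow_pow _ _).eq]
    calc (a * c) ^ (n + 1) * (a * c) ^ (n + 1)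
        = c ^ (n + 1) * a * (a ^ n * (a * c) ^ (n + 1)) := by
          nth_rw 1 [hfac]; rw [mul_assoc]
      _ = (a * c) ^ (n + 1) := by rw [habsorb, hfac]
  have hzero := hB _ (pow_succ_mem_of_mem (mul_aeval_mem_of_mem haB q) n) hidem
  exact ⟨n, by rw [← habsorb (n + 1), hzero, mul_zero]⟩

variable {R A : Type*} [CommSemiring R] [Semiring A] [Algebra R A]

theorem isNilpotent_span_of_forall_mul_eq_smul_mul {s : Set A} (hs : s.Finite)
    (hnil : ∀ x ∈ s, IsNilpotent x)
    (hcomm : ∀ x ∈ s, ∀ y ∈ s, ∃ c : R, IsUnit c ∧ x * y = c • (y * x)) :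
    IsNilpotent (span R s) := by
  classical
  lift s to Finset A using hs
  have hsum : span R (s : Set A) = ∑ x ∈ s, span R {x} := by
    clear hnil hcomm
    induction s using Finset.induction_on with
    | empty => simp
    | insert a s ha ih => rw [Finset.coe_insert, span_insert, Finset.sum_insert ha, ih]; rfl
  rw [hsum]
  refine Commute.isNilpotent_sum (fun x hx => ?_) fun x y hx hy => ?_
  · obtain ⟨n, hn⟩ := hnil x hx
    exact ⟨n, by rw [span_pow, Set.singleton_pow, hn, span_zero_singleton, zero_eq_bot]⟩
  · obtain ⟨c, hc, hxy⟩ := hcomm x hx y hy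
    rw [commute_iff_eq, span_mul_span, span_mul_span, Set.singleton_mul_singleton,
      Set.singleton_mul_singleton, hxy, span_singleton_smul_eq hc]

theorem eq_bot_of_le_smul_of_isNilpotent {M : Type*} [AddCommMonoid M] [Module R M] [Module A M]
    [IsScalarTower R A M] {E : Submodule R A} (hE : IsNilpotent E) {W : Submodule R M}
    (hW : W ≤ E • W) : W = ⊥ := by
  have hpow : ∀ n, W ≤ E ^ n • W := fun n => by
    induction n with
    | zero => rw [pow_zero, Submodule.one_smul]
    | succ n ih =>
      rw [pow_succ', ← smul_eq_mul, Submodule.smul_assoc]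
      exact hW.trans (smul_mono_right E ih)
  obtain ⟨n, hn⟩ := hE
  simpa [hn] using hpow n

end Nilpotent

namespace ZinbielSuper

variable (S : ZinbielSuper K Z)

/-- Elements of a definite parity; `0` has both. -/
def IsHomogeneous (x : Z) : Prop :=
  x ∈ S.Z0 ∨ x ∈ S.Z1

/-- Right multiplication: `S.rightMul y x = x·y`. -/
abbrev rightMul : Z →ₗ[K] End K Z :=
  S.mul.flip

section RightMul

variable {S}

theorem rightMul_mul_rightMul_of_even {y z : Z} (hy : S.IsHomogeneous y) (hz : S.IsHomogeneous z)
    (hyz : y ∈ S.Z0 ∨ z ∈ S.Z0) :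
    S.rightMul z * S.rightMul y = S.rightMul (S.mul y z + S.mul z y) :=
  LinearMap.ext_on_codisjoint S.compl.codisjoint
    (fun x hx => S.zinb_even x y z (.inl hx) hy hz hyz)
    (fun x hx => S.zinb_even x y z (.inr hx) hy hz hyz)

theorem rightMul_mul_rightMul_of_odd {y z : Z} (hy : y ∈ S.Z1) (hz : z ∈ S.Z1) :
    S.rightMul z * S.rightMul y = S.rightMul (S.mul y z - S.mul z y) :=
  LinearMap.ext_on_codisjoint S.compl.codisjoint
    (fun x hx => S.zinb_odd x y z (.inl hx) hy hz) (fun x hx => S.zinb_odd x y z (.inr hx) hy hz)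

theorem exists_rightMul_mul_rightMul {y z : Z} (hy : S.IsHomogeneous y)
    (hz : S.IsHomogeneous z) :
    ∃ s : K, IsUnit s ∧ S.rightMul z * S.rightMul y = S.rightMul (S.mul y z + s • S.mul z y) ∧
      S.rightMul z * S.rightMul y = s • (S.rightMul y * S.rightMul z) := by
  by_cases hyz : y ∈ S.Z0 ∨ z ∈ S.Z0
  · refine ⟨1, isUnit_one, ?_, ?_⟩
    · rw [rightMul_mul_rightMul_of_even hy hz hyz, one_smul]
    · rw [rightMul_mul_rightMul_of_even hy hz hyz,
        rightMul_mul_rightMul_of_even hz hy hyz.symm, one_smul, add_comm]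
  · rw [not_or] at hyz
    have hy1 := hy.resolve_left hyz.1
    have hz1 := hz.resolve_left hyz.2
    refine ⟨-1, isUnit_one.neg, ?_, ?_⟩
    · rw [rightMul_mul_rightMul_of_odd hy1 hz1, neg_one_smul, sub_eq_add_neg]
    · rw [rightMul_mul_rightMul_of_odd hy1 hz1, rightMul_mul_rightMul_of_odd hz1 hy1,
        neg_one_smul, ← map_neg, neg_sub]

variable (S) in
/-- The right multiplications by even elements, as a subalgebra (without unit) of `End K Z`. -/
def evenRightMul : NonUnitalSubalgebra K (End K Z) :=
  { S.Z0.map S.rightMul with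
    mul_mem' := by
      rintro _ _ ⟨z, hz, rfl⟩ ⟨y, hy, rfl⟩
      exact ⟨_, add_mem (S.mul00 y hy z hz) (S.mul00 z hz y hy),
        (rightMul_mul_rightMul_of_even (.inl hy) (.inl hz) (.inl hy)).symm⟩ }

theorem rightMul_eq_zero_of_isIdempotentElem {g : Z} (hg : g ∈ S.Z0)
    (h : IsIdempotentElem (S.rightMul g)) : S.rightMul g = 0 := by
  have rightMul_sq : ∀ {x}, x ∈ S.Z0 →
      S.rightMul x * S.rightMul x = S.rightMul ((2 : K) • S.mul x x) := fun {x} hx => by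
    rw [rightMul_mul_rightMul_of_even (.inl hx) (.inl hx) (.inl hx), two_smul]
  set k := S.mul g g
  have hk : k ∈ S.Z0 := S.mul00 g hg g hg
  have hgk : S.rightMul g = (2 : K) • S.rightMul k := by rw [← map_smul, ← rightMul_sq hg, h]
  have hkk : (2 : K) • S.mul k k = k :=
    calc (2 : K) • S.mul k k = S.rightMul g k := by rw [hgk]; rfl
      _ = k := LinearMap.congr_fun h g
  have hk_idem : S.rightMul k * S.rightMul k = S.rightMul k := by rw [rightMul_sq hk, hkk]
  have hdouble : S.rightMul g = (2 : K) • S.rightMul g :=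
    calc S.rightMul g = S.rightMul g * S.rightMul g := h.symm
      _ = (2 : K) • (2 : K) • S.rightMul k := by rw [hgk, smul_mul_smul_comm, hk_idem, mul_smul]
      _ = (2 : K) • S.rightMul g := by rw [← hgk]
  rwa [two_smul, left_eq_add] at hdouble

variable [FiniteDimensional K Z]

theorem isNilpotent_rightMul {x : Z} (hx : S.IsHomogeneous x) : IsNilpotent (S.rightMul x) := by
  rcases hx with hx | hx
  · refine isNilpotent_of_forall_isIdempotentElem_eq_zero (B := S.evenRightMul)
      (Algebra.IsAlgebraic.isAlgebraic _) ⟨x, hx, rfl⟩ ?_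
    rintro _ ⟨g, hg, rfl⟩ hidem
    exact rightMul_eq_zero_of_isIdempotentElem hg hidem
  · exact ⟨2, by rw [sq, rightMul_mul_rightMul_of_odd hx hx, sub_self, map_zero]⟩

variable (S)

theorem exists_finite_homogeneous_span_eq_top :
    ∃ s : Set Z, s.Finite ∧ (∀ x ∈ s, S.IsHomogeneous x) ∧ span K s = ⊤ := by
  obtain ⟨s₀, hs₀, hspan₀⟩ := fg_def.1 (IsNoetherian.noetherian S.Z0)
  obtain ⟨s₁, hs₁, hspan₁⟩ := fg_def.1 (IsNoetherian.noetherian S.Z1)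
  refine ⟨s₀ ∪ s₁, hs₀.union hs₁, ?_, by rw [span_union, hspan₀, hspan₁, S.compl.sup_eq_top]⟩
  rintro x (hx | hx)
  · exact .inl (hspan₀ ▸ subset_span hx)
  · exact .inr (hspan₁ ▸ subset_span hx)

theorem isNilpotent_map_rightMul_top : IsNilpotent ((⊤ : Submodule K Z).map S.rightMul) := by
  obtain ⟨s, hfin, hhom, hspan⟩ := S.exists_finite_homogeneous_span_eq_top
  rw [← hspan, map_span]
  apply isNilpotent_span_of_forall_mul_eq_smul_mul (hfin.image _)
  · rintro _ ⟨x, hx, rfl⟩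
    exact isNilpotent_rightMul (hhom x hx)
  · rintro _ ⟨z, hz, rfl⟩ _ ⟨y, hy, rfl⟩
    obtain ⟨c, hc, -, hcomm⟩ := exists_rightMul_mul_rightMul (hhom y hy) (hhom z hz)
    exact ⟨c, hc, hcomm⟩

end RightMul

/-- The product `A·B` of subspaces; it is `mulSub S.mul A B`, with the API of `Submodule.map₂`. -/
local infixl:70 "⬝" => map₂ (mul S)

theorem eq_bot_of_le_mul_top [FiniteDimensional K Z] {W : Submodule K Z} (hW : W ≤ W⬝⊤) :
    W = ⊥ := by
  refine eq_bot_of_le_smul_of_isNilpotent S.isNilpotent_map_rightMul_top (hW.trans ?_)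
  refine map₂_le.2 fun w hw z hz => ?_
  have hRz : S.rightMul z ∈ map S.rightMul ⊤ := mem_map_of_mem hz
  exact (smul_mem_smul hRz hw : S.rightMul z • w ∈ map S.rightMul ⊤ • W)

/-- Graded subspaces, i.e. those spanned by their homogeneous elements. -/
def IsGraded (A : Submodule K Z) : Prop :=
  A ≤ A ⊓ S.Z0 ⊔ A ⊓ S.Z1

theorem isGraded_top : S.IsGraded ⊤ := by
  simp only [IsGraded, top_inf_eq, S.compl.sup_eq_top, le_refl]

variable {S} {A B C F : Submodule K Z}

theorem IsGraded.mul (hA : S.IsGraded A) (hB : S.IsGraded B) : S.IsGraded (A⬝B) := by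
  have hcomp : ∀ {P Q T : Submodule K Z}, (∀ x ∈ P, ∀ y ∈ Q, S.mul x y ∈ T) →
      (A ⊓ P)⬝(B ⊓ Q) ≤ A⬝B ⊓ T := fun hT =>
    map₂_le.2 fun a ha b hb => ⟨apply_mem_map₂ _ ha.1 hb.1, hT a ha.2 b hb.2⟩
  refine (map₂_le_map₂ hA hB).trans ?_
  rw [map₂_sup_left, map₂_sup_right, map₂_sup_right]
  exact sup_le (sup_le_sup (hcomp S.mul00) (hcomp S.mul01))
    (sup_le (le_sup_of_le_right (hcomp S.mul10)) (le_sup_of_le_left (hcomp S.mul11)))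

theorem IsGraded.le_of_forall_isHomogeneous (hA : S.IsGraded A) {T : Submodule K Z}
    (h : ∀ a ∈ A, S.IsHomogeneous a → a ∈ T) : A ≤ T :=
  hA.trans (sup_le (fun a ha => h a ha.1 (.inl ha.2)) fun a ha => h a ha.1 (.inr ha.2))

theorem map₂_le_of_forall_isHomogeneous {N : Type*} [AddCommMonoid N] [Module K N]
    {g : Z →ₗ[K] Z →ₗ[K] N} (hB : S.IsGraded B) (hC : S.IsGraded C) {T : Submodule K N}
    (h : ∀ b ∈ B, ∀ c ∈ C, S.IsHomogeneous b → S.IsHomogeneous c → g b c ∈ T) :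
    map₂ g B C ≤ T :=
  map₂_le.2 fun _ hb c hc =>
    hB.le_of_forall_isHomogeneous (T := T.comap (g.flip c)) (fun b hb hbh =>
      hC.le_of_forall_isHomogeneous (T := T.comap (g b)) (fun c hc => h b hb c hc hbh) hc) hb

theorem mul_mul_le (hB : S.IsGraded B) (hC : S.IsGraded C) {T : Submodule K Z}
    (h : ∀ a ∈ A, ∀ b ∈ B, ∀ c ∈ C, S.IsHomogeneous b → S.IsHomogeneous c →
      S.mul (S.mul a b) c ∈ T) : A⬝B⬝C ≤ T := by
  refine map₂_le.2 fun d hd c hc => ?_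
  suffices A⬝B ≤ T.comap (S.rightMul c) from this hd
  exact map₂_le.2 fun a ha b hb =>
    map₂_le_of_forall_isHomogeneous (g := S.mul ∘ₗ S.mul a) hB hC (h a ha)
      (apply_mem_map₂ _ hb hc)

theorem mul_mul_le_mul_mul_right_comm (hB : S.IsGraded B) (hC : S.IsGraded C) :
    A⬝B⬝C ≤ A⬝C⬝B := by
  refine mul_mul_le hB hC fun a ha b hb c hc hbh hch => ?_
  obtain ⟨s, -, -, hcomm⟩ := exists_rightMul_mul_rightMul hbh hch
  have hacb : S.mul (S.mul a b) c = s • S.mul (S.mul a c) b := LinearMap.congr_fun hcomm a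
  rw [hacb]
  exact smul_mem _ s (apply_mem_map₂ _ (apply_mem_map₂ _ ha hc) hb)

theorem mul_mul_le_mul_sup (hB : S.IsGraded B) (hC : S.IsGraded C) :
    A⬝B⬝C ≤ A⬝(B⬝C ⊔ C⬝B) := by
  refine mul_mul_le hB hC fun a ha b hb c hc hbh hch => ?_
  obtain ⟨s, -, hzinb, -⟩ := exists_rightMul_mul_rightMul hbh hch
  have habc : S.mul (S.mul a b) c = S.mul a (S.mul b c + s • S.mul c b) :=
    LinearMap.congr_fun hzinb a
  rw [habc]
  exact apply_mem_map₂ _ ha (add_mem (mem_sup_left (apply_mem_map₂ _ hb hc))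
    (mem_sup_right (smul_mem _ s (apply_mem_map₂ _ hc hb))))

theorem mul_mul_le_sup (hB : S.IsGraded B) (hC : S.IsGraded C) :
    A⬝(B⬝C) ≤ A⬝B⬝C ⊔ A⬝(C⬝B) := by
  refine map₂_le.2 fun a ha d hd => ?_
  suffices B⬝C ≤ (A⬝B⬝C ⊔ A⬝(C⬝B)).comap (S.mul a) from this hd
  rw [← map_le_iff_le_comap, map_map₂]
  refine map₂_le_of_forall_isHomogeneous hB hC fun b hb c hc hbh hch => ?_
  obtain ⟨s, -, hzinb, -⟩ := exists_rightMul_mul_rightMul hbh hch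
  have habc : S.mul (S.mul a b) c = S.mul a (S.mul b c + s • S.mul c b) :=
    LinearMap.congr_fun hzinb a
  have habc' : S.mul a (S.mul b c) = S.mul (S.mul a b) c - s • S.mul a (S.mul c b) := by
    rw [habc, map_add, map_smul, add_sub_cancel_right]
  rw [LinearMap.compr₂_apply, habc']
  exact sub_mem (mem_sup_left (apply_mem_map₂ _ (apply_mem_map₂ _ ha hb) hc))
    (mem_sup_right (smul_mem _ s (apply_mem_map₂ _ ha (apply_mem_map₂ _ hc hb))))

/-- `x(a(bf)) = (xa)(bf) ± x((bf)a)` and `(bf)a = ±(ba)f`. -/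
theorem mul_mul_mul_le_sup (hA : S.IsGraded A) (hB : S.IsGraded B) (hF : S.IsGraded F) :
    C⬝(A⬝(B⬝F)) ≤ C⬝A⬝(B⬝F) ⊔ C⬝(B⬝A⬝F) :=
  (mul_mul_le_sup hA (hB.mul hF)).trans
    (sup_le_sup_left (map₂_le_map₂_right (mul_mul_le_mul_mul_right_comm hF hA)) _)

theorem eq_bot_of_mul_eq_of_mul_self (hB : S.IsGraded B) (hBB : B⬝B ≤ B)
    (hder : ∀ G, S.IsGraded G → B⬝B⬝G = G → G = ⊥) (hF : S.IsGraded F) (hBF : B⬝F = F) :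
    F = ⊥ := by
  set D := B⬝B
  have hD : S.IsGraded D := hB.mul hB
  have hDB : D⬝B ≤ D := map₂_le_map₂_left hBB
  have hDF : D⬝F ≤ F := (map₂_le_map₂_left hBB).trans hBF.le
  have hF_le : F ≤ D⬝F ⊔ B⬝(D⬝F) :=
    calc F = B⬝(B⬝(B⬝F)) := by rw [hBF, hBF, hBF]
      _ ≤ D⬝(B⬝F) ⊔ B⬝(D⬝F) := mul_mul_mul_le_sup hB hB hF
      _ = D⬝F ⊔ B⬝(D⬝F) := by rw [hBF]
  have hDBDF : D⬝(B⬝(D⬝F)) ≤ D⬝(D⬝F) :=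
    (mul_mul_mul_le_sup hB hD hF).trans
      (sup_le (map₂_le_map₂_left hDB) (map₂_le_map₂_right (map₂_le_map₂_left hDB)))
  have hDF_le : D⬝F ≤ D⬝(D⬝F) := by
    refine (map₂_le_map₂_right hF_le).trans ?_
    rw [map₂_sup_right]
    exact sup_le le_rfl hDBDF
  have hDF_bot : D⬝F = ⊥ :=
    hder _ (hD.mul hF) (le_antisymm (map₂_le_map₂_right hDF) hDF_le)
  rwa [hDF_bot, map₂_bot_right, bot_sup_eq, le_bot_iff] at hF_le

theorem eq_bot_of_mul_eq [FiniteDimensional K Z] (hB : S.IsGraded B) (hBB : B⬝B ≤ B)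
    (hF : S.IsGraded F) (hBF : B⬝F = F) : F = ⊥ := by
  induction B using WellFoundedLT.induction generalizing F with
  | ind B ih =>
    rcases hBB.eq_or_lt with heq | hlt
    · have hB_bot : B = ⊥ := S.eq_bot_of_le_mul_top (heq.ge.trans (map₂_le_map₂_right le_top))
      rw [← hBF, hB_bot, map₂_bot_left]
    · exact eq_bot_of_mul_eq_of_mul_self hB hBB
        (fun G hG => ih _ hlt (hB.mul hB) (map₂_le_map₂ hBB hBB) hG) hF hBF

variable (S)

/-- The left powers `Z, Z·Z, Z·(Z·Z), …`, numbered from `0`. -/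
def leftPower : ℕ → Submodule K Z
  | 0 => ⊤
  | n + 1 => ⊤⬝leftPower n

theorem leftPower_antitone : Antitone S.leftPower :=
  antitone_nat_of_succ_le fun n => by
    induction n with
    | zero => exact le_top
    | succ n ih => exact map₂_le_map₂_right ih

theorem isGraded_leftPower (n : ℕ) : S.IsGraded (S.leftPower n) := by
  induction n with
  | zero => exact S.isGraded_top
  | succ n ih => exact S.isGraded_top.mul ih

theorem leftPower_mul_top_le (n : ℕ) : (S.leftPower n)⬝⊤ ≤ S.leftPower (n + 1) := by
  induction n with
  | zero => exact le_rfl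
  | succ n ih =>
    exact (mul_mul_le_mul_sup (S.isGraded_leftPower n) S.isGraded_top).trans
      (map₂_le_map₂_right (sup_le ih le_rfl))

theorem exists_leftPower_eq_bot [FiniteDimensional K Z] : ∃ n, S.leftPower n = ⊥ := by
  obtain ⟨n, hn⟩ := IsArtinian.monotone_stabilizes
    (⟨OrderDual.toDual ∘ S.leftPower, S.leftPower_antitone⟩ : ℕ →o (Submodule K Z)ᵒᵈ)
  have hstable : ⊤⬝(S.leftPower n) = S.leftPower n := (hn (n + 1) n.le_succ).symm
  exact ⟨n, eq_bot_of_mul_eq S.isGraded_top le_top (S.isGraded_leftPower n) hstable⟩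

theorem eq_bot_of_le_top_mul_sup_mul_top [FiniteDimensional K Z] {I : Submodule K Z}
    (hI : I ≤ ⊤⬝I ⊔ I⬝⊤) : I = ⊥ := by
  have hle : ∀ n, I ≤ S.leftPower n := fun n => by
    induction n with
    | zero => exact le_top
    | succ n ih =>
      exact hI.trans (sup_le (map₂_le_map₂_right ih)
        ((map₂_le_map₂_left ih).trans (S.leftPower_mul_top_le n)))
  obtain ⟨n, hn⟩ := S.exists_leftPower_eq_bot
  exact le_bot_iff.1 (hn ▸ hle n)

variable {S}

theorem isIdeal_iff {I : Submodule K Z} : IsIdeal S I ↔ ⊤⬝I ⊔ I⬝⊤ ≤ I := by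
  rw [sup_le_iff, map₂_le, map₂_le]
  exact ⟨fun h => ⟨fun x _ a ha => (h x a ha).1, fun a ha x _ => (h x a ha).2⟩,
    fun h x a ha => ⟨h.1 x mem_top a ha, h.2 a ha x mem_top⟩⟩

theorem isIdeal_of_le {I J : Submodule K Z} (hIJ : ⊤⬝I ⊔ I⬝⊤ ≤ J) (hJI : J ≤ I) :
    IsIdeal S J :=
  isIdeal_iff.2 ((sup_le_sup (map₂_le_map₂_right hJI) (map₂_le_map₂_left hJI)).trans hIJ)

theorem top_mul_sup_mul_top_eq_bot_of_isMinimalIdeal [FiniteDimensional K Z] {I : Submodule K Z}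
    (hI : IsMinimalIdeal S I) : ⊤⬝I ⊔ I⬝⊤ = ⊥ := by
  obtain ⟨hideal, hne, hmin⟩ := hI
  have hle := isIdeal_iff.1 hideal
  exact (hmin _ (isIdeal_of_le le_rfl hle) hle).resolve_right fun h =>
    hne (S.eq_bot_of_le_top_mul_sup_mul_top h.ge)

end ZinbielSuper

/-- A minimal ideal `I` of a finite-dimensional Zinbiel superalgebra satisfies
`I·Z = Z·I = 0` and `dim I = 1`. -/
theorem minimalIdeal_ann_dim_one (K : Type*) [Field K] (Z : Type*)
    [AddCommGroup Z] [Module K Z] [FiniteDimensional K Z] (S : ZinbielSuper K Z)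
    (I : Submodule K Z) (hI : IsMinimalIdeal S I) :
    (∀ a ∈ I, ∀ x : Z, S.mul a x = 0 ∧ S.mul x a = 0) ∧ finrank K I = 1 := by
  have hzero := ZinbielSuper.top_mul_sup_mul_top_eq_bot_of_isMinimalIdeal hI
  obtain ⟨-, hne, hmin⟩ := hI
  constructor
  · obtain ⟨hleft, hright⟩ := sup_eq_bot_iff.1 hzero
    exact fun a ha x => ⟨(mem_bot K).1 (hright ▸ apply_mem_map₂ S.mul ha mem_top),
      (mem_bot K).1 (hleft ▸ apply_mem_map₂ S.mul mem_top ha)⟩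
  · obtain ⟨a, ha, ha0⟩ := exists_mem_ne_zero_of_ne_bot hne
    have hle : span K {a} ≤ I := (span_singleton_le_iff_mem a I).2 ha
    have hline : IsIdeal S (span K {a}) := ZinbielSuper.isIdeal_of_le (hzero.trans_le bot_le) hle
    have hspan : span K {a} = I := (hmin _ hline hle).resolve_left (mt span_singleton_eq_bot.1 ha0)
    rw [← hspan, finrank_span_singleton ha0]
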